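/- arXiv:2302.09047 — 2 statements merged into one kernel-verified Lean document; each statement's English description precedes it below -/
import Mathlib

section
/- For a uniformly random subset S of {0,1}^n, the fourth central moment of the number X_1 of edges contained in S equals (n·2^n/1024)·(12 n³ 2^n + 12 n² 2^n + 40 n³ + 3 n 2^n − 48 n² + 12 n − 16). -/
/-!
The indicators of a random subset are encoded by independent uniform signs `ω x` (`+1` when
`x ∈ S`). With `L = ∑ x, ω x` and `Q = ∑ ω x * ω y` over the edges `{x, y}` of the cube,
`4 X₁ = n 2^n / 2 + n L + Q` (`Xr_one`), so the fourth central moment is `E (n L + Q)^4 / 256`.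
Since `L` is odd and `Q` is even under `ω ↦ -ω`, only `E L^4`, `E L^2 Q^2` and `E Q^4` are needed.

These are computed by induction on the dimension. The `(n+1)`-cube consists of two copies of the
`n`-cube joined by a perfect matching, so for configurations `a`, `b` on the two halves
`L (glue a b) = L a + L b` and `Q (glue a b) = Q a + Q b + T a b` with `T a b = ∑ x, a x * b x`.
Flipping the sign of `b` removes the odd terms. In the remaining ones `T` is eliminated by
integrating over one half: `T a ·` is distributed like `L` (`E_T`), and the mixed terms are the
contractions `E_b (L b * T a b) = L a` (`E_LT`) and `E_b (Q b * T a b ^ 2) = 2 * Q a` (`E_QTT`),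
themselves proved by the same halving of the cube.
-/

open Finset

def cube {n : ℕ} (w : Fin n → Option Bool) : Finset (Fin n → Bool) :=
  Finset.univ.filter fun x => ∀ i, ∀ b, w i = some b → x i = b

def Word (n r : ℕ) : Finset (Fin n → Option Bool) :=
  Finset.univ.filter fun w => (Finset.univ.filter fun i => w i = none).card = r

/-- Expectation with respect to a uniformly random subset `S ⊆ {0,1}^n`. -/
noncomputable def Ex (n : ℕ) (f : Finset (Fin n → Bool) → ℝ) : ℝ :=
  (∑ S : Finset (Fin n → Bool), f S) / (Fintype.card (Finset (Fin n → Bool)))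

/-- The number of `r`-dimensional subcubes contained in `S`. -/
def Xr (n r : ℕ) (S : Finset (Fin n → Bool)) : ℕ :=
  ((Word n r).filter fun w => cube w ⊆ S).card

namespace SignCube

open scoped BigOperators

/-- Sign configurations on the vertices of the cube. -/
abbrev Signs (n : ℕ) : Type := (Fin n → Bool) → ℤˣ

/-- Expectation over a uniformly random sign configuration, i.e. over independent fair signs. -/
noncomputable def E (n : ℕ) (f : Signs n → ℝ) : ℝ := 𝔼 ω, f ω

/-- The configuration on the `(n+1)`-cube equal to `a` on the face where coordinate `0` is `false`
and to `b` on the face where it is `true`. -/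
def glue {n : ℕ} (a b : Signs n) : Signs (n + 1) :=
  fun x => bif x 0 then b (Fin.tail x) else a (Fin.tail x)

/-- Sum of all the signs. -/
noncomputable def L {n : ℕ} (a : Signs n) : ℝ := ∑ x, ((a x : ℤ) : ℝ)

/-- Overlap of two configurations: when they are the two halves of a configuration on the
`(n+1)`-cube, the sum over the edges joining the halves of the product of the endpoint signs. -/
noncomputable def T {n : ℕ} (a b : Signs n) : ℝ := ∑ x, ((a x : ℤ) : ℝ) * ((b x : ℤ) : ℝ)

/-- Sum over the edges of the cube of the product of the two endpoint signs, defined by splitting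
along coordinate `0`: the edges inside each half, and the matching between the halves. -/
noncomputable def Q : {n : ℕ} → Signs n → ℝ
  | 0, _ => 0
  | _ + 1, ω =>
      Q (fun x => ω (Fin.cons false x)) + Q (fun x => ω (Fin.cons true x)) +
        T (fun x => ω (Fin.cons false x)) (fun x => ω (Fin.cons true x))

/-! ### Expectation and splitting of the cube -/

lemma E_congr {n : ℕ} {f g : Signs n → ℝ} (h : ∀ ω, f ω = g ω) : E n f = E n g := by
  rw [funext h]

lemma E_const (n : ℕ) (c : ℝ) : E n (fun _ => c) = c := Fintype.expect_const c

lemma E_add {n : ℕ} (f g : Signs n → ℝ) : E n (fun ω => f ω + g ω) = E n f + E n g :=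
  Finset.expect_add_distrib _ _ _

lemma E_cmul {n : ℕ} (c : ℝ) (f : Signs n → ℝ) : E n (fun ω => c * f ω) = c * E n f :=
  (Finset.mul_expect _ _ _).symm

lemma E_mulc {n : ℕ} (c : ℝ) (f : Signs n → ℝ) : E n (fun ω => f ω * c) = E n f * c :=
  (Finset.expect_mul _ _ _).symm

lemma E_comm {n m : ℕ} (f : Signs n → Signs m → ℝ) :
    E n (fun a => E m fun b => f a b) = E m fun b => E n fun a => f a b :=
  Finset.expect_comm _ _ _

lemma E_mul_left {n : ℕ} (a : Signs n) (f : Signs n → ℝ) : E n (fun b => f (a * b)) = E n f :=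
  Fintype.expect_equiv (Equiv.mulLeft a) _ _ fun _ => rfl

lemma E_neg {n : ℕ} (f : Signs n → ℝ) : E n (fun b => f (-b)) = E n f :=
  Fintype.expect_equiv (Equiv.neg _) _ _ fun _ => rfl

/-- Only the part of `f` that is even under a global sign flip contributes to its expectation. -/
lemma E_even {n : ℕ} (f : Signs n → ℝ) : E n f = E n fun b => 1 / 2 * (f b + f (-b)) := by
  rw [E_cmul, E_add, E_neg]; ring

@[simp] lemma glue_cons_false {n : ℕ} (a b : Signs n) (x : Fin n → Bool) :
    glue a b (Fin.cons false x) = a x := by simp [glue]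

@[simp] lemma glue_cons_true {n : ℕ} (a b : Signs n) (x : Fin n → Bool) :
    glue a b (Fin.cons true x) = b x := by simp [glue]

/-- A configuration on the `(n+1)`-cube is a pair of configurations on its two halves. -/
def glueEquiv (n : ℕ) : Signs n × Signs n ≃ Signs (n + 1) where
  toFun p := glue p.1 p.2
  invFun ω := (fun x => ω (Fin.cons false x), fun x => ω (Fin.cons true x))
  left_inv p := by simp
  right_inv ω := by
    funext x
    induction x using Fin.consCases with
    | cons i x => cases i <;> simp

lemma E_succ {n : ℕ} (f : Signs (n + 1) → ℝ) :
    E (n + 1) f = E n fun a => E n fun b => f (glue a b) := by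
  unfold E
  rw [← Finset.expect_product', Finset.univ_product_univ]
  exact (Fintype.expect_equiv (glueEquiv n) _ _ fun _ => rfl).symm

lemma sum_cube_succ {α : Type*} [Fintype α] {n : ℕ} (f : (Fin (n + 1) → α) → ℝ) :
    ∑ x, f x = ∑ i, ∑ x : Fin n → α, f (Fin.cons i x) := by
  rw [← Finset.sum_product', Finset.univ_product_univ]
  exact (Fintype.sum_equiv (Fin.consEquiv fun _ => α) _ _ fun _ => rfl).symm

@[simp] lemma L_glue {n : ℕ} (a b : Signs n) : L (glue a b) = L a + L b := by
  simp [L, sum_cube_succ, add_comm]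

@[simp] lemma T_glue {n : ℕ} (a b c d : Signs n) :
    T (glue a b) (glue c d) = T a c + T b d := by
  simp [T, sum_cube_succ, add_comm]

@[simp] lemma Q_glue {n : ℕ} (a b : Signs n) : Q (glue a b) = Q a + Q b + T a b := by
  simp [Q]

@[simp] lemma L_neg {n : ℕ} (a : Signs n) : L (-a) = -L a := by simp [L]

@[simp] lemma T_neg_left {n : ℕ} (a b : Signs n) : T (-a) b = -T a b := by simp [T]

@[simp] lemma T_neg_right {n : ℕ} (a b : Signs n) : T a (-b) = -T a b := by simp [T]

@[simp] lemma Q_neg {n : ℕ} (a : Signs n) : Q (-a) = Q a := by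
  induction n with
  | zero => rfl
  | succ n ih =>
    obtain ⟨⟨a, b⟩, rfl⟩ := (glueEquiv n).surjective a
    have h : -(glue a b) = glue (-a) (-b) := by
      funext x; simp only [glue, Pi.neg_apply]; cases x 0 <;> rfl
    simp [glueEquiv, h, ih]

lemma T_comm {n : ℕ} (a b : Signs n) : T a b = T b a := by simp [T, mul_comm]

lemma T_mul_right {n : ℕ} (a b c : Signs n) : T a (c * b) = T (c * a) b := by
  simp only [T, Pi.mul_apply, Units.val_mul, Int.cast_mul]
  exact Finset.sum_congr rfl fun _ _ => by ring

lemma T_one {n : ℕ} (b : Signs n) : T 1 b = L b := by simp [T, L]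

lemma mul_self_signs {n : ℕ} (a : Signs n) : a * a = 1 := by
  funext x; simp

/-- For fixed `a`, the overlap `T a b` has the law of `L b`, by the substitution `b ↦ a * b`. -/
lemma E_T {n : ℕ} (a : Signs n) (f : ℝ → ℝ) :
    E n (fun b => f (T a b)) = E n fun b => f (L b) := by
  rw [← E_mul_left a (fun b => f (T a b))]
  simp only [T_mul_right, mul_self_signs, T_one]

/-! ### Moments of `L` -/

lemma E_L (n : ℕ) : E n (fun a => L a) = 0 := by
  rw [E_even]
  simp [E_const]

lemma E_T_one {n : ℕ} (a : Signs n) : E n (fun b => T a b) = 0 := by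
  rw [E_T a fun t => t, E_L]

lemma E_zero (f : Signs 0 → ℝ) : E 0 f = (f 1 + f (-1)) / 2 := by
  have h : (Finset.univ : Finset (Signs 0)) = {1, -1} := by decide
  unfold E
  rw [Finset.expect_eq_sum_div_card, h, Finset.sum_pair (by decide), Finset.card_pair (by decide)]
  norm_num

lemma L_one_zero : L (1 : Signs 0) = 1 := by simp [L]

lemma Q_zero (a : Signs 0) : Q a = 0 := rfl

lemma T_one_one_zero : T (1 : Signs 0) 1 = 1 := by simp [T]

lemma E_L_sq (n : ℕ) : E n (fun a => L a ^ 2) = 2 ^ n := by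
  induction n with
  | zero => simp [E_zero, L_one_zero]
  | succ n ih =>
    calc _ = E n fun a => E n fun b => L a ^ 2 + L b ^ 2 + 2 * (L a * L b) := by
            rw [E_succ]; refine E_congr fun a => E_congr fun b => ?_
            simp only [L_glue]; ring
      _ = _ := by
            simp only [E_add, E_cmul, E_mulc, E_const, E_L, ih]; ring

lemma E_L_four (n : ℕ) : E n (fun a => L a ^ 4) = 3 * (2 ^ n) ^ 2 - 2 * 2 ^ n := by
  induction n with
  | zero => norm_num [E_zero, L_one_zero]
  | succ n ih =>
    calc _ = E n fun a => E n fun b =>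
              L a ^ 4 + 6 * (L a ^ 2 * L b ^ 2) + L b ^ 4 := by
            rw [E_succ]; refine E_congr fun a => ?_
            rw [E_even]; refine E_congr fun b => ?_
            simp only [L_glue, L_neg]; ring
      _ = _ := by
            simp only [E_add, E_cmul, E_mulc, E_const, E_L_sq, ih]; ring

lemma E_T_sq {n : ℕ} (a : Signs n) : E n (fun b => T a b ^ 2) = 2 ^ n := by
  rw [E_T a fun t => t ^ 2, E_L_sq]

lemma E_T_sq' {n : ℕ} (b : Signs n) : E n (fun a => T a b ^ 2) = 2 ^ n := by
  simp_rw [fun a => T_comm a b, E_T_sq]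

lemma E_T_four {n : ℕ} (a : Signs n) :
    E n (fun b => T a b ^ 4) = 3 * (2 ^ n) ^ 2 - 2 * 2 ^ n := by
  rw [E_T a fun t => t ^ 4, E_L_four]

/-! ### Integrating out one half of the cube, and moments of `Q` -/

lemma E_LT {n : ℕ} (a : Signs n) : E n (fun b => L b * T a b) = L a := by
  induction n with
  | zero =>
    have h : a = 1 ∨ a = -1 := by revert a; decide
    rcases h with rfl | rfl <;> simp [E_zero, L_one_zero, T_one_one_zero]
  | succ n ih =>
    obtain ⟨⟨a, a'⟩, rfl⟩ := (glueEquiv n).surjective a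
    calc _ = E n fun b => E n fun b' =>
              L b * T a b + L b' * T a' b' + L b * T a' b' + T a b * L b' := by
            rw [E_succ]; refine E_congr fun b => E_congr fun b' => ?_
            simp only [glueEquiv, Equiv.coe_fn_mk, L_glue, T_glue]; ring
      _ = _ := by
            simp only [E_add, E_cmul, E_mulc, E_const, E_L, E_T_one, ih, glueEquiv,
              Equiv.coe_fn_mk, L_glue]
            ring

lemma E_LT' {n : ℕ} (b : Signs n) : E n (fun a => L a * T a b) = L b := by
  simp_rw [fun a => T_comm a b, E_LT]

/-- Summing out the middle configuration composes two overlaps; this follows from `E_LT` by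
translating by `c`. -/
lemma E_TT {n : ℕ} (a c : Signs n) : E n (fun b => T c b * T a b) = T c a := by
  rw [← E_mul_left c]
  simp only [T_mul_right, mul_self_signs, T_one, E_LT]
  rw [← T_one, T_mul_right, mul_one]

lemma E_Q (n : ℕ) : E n (fun a => Q a) = 0 := by
  induction n with
  | zero => simp [E_zero, Q_zero]
  | succ n ih =>
    rw [E_succ]
    simp only [Q_glue, E_add, E_const, ih, E_T_one, add_zero]

lemma E_Q_sq (n : ℕ) : E n (fun a => Q a ^ 2) = n * 2 ^ n / 2 := by
  induction n with
  | zero => simp [E_zero, Q_zero]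
  | succ n ih =>
    calc _ = E n fun a => E n fun b => Q a ^ 2 + Q b ^ 2 + 2 * (Q a * Q b) + T a b ^ 2 := by
            rw [E_succ]; refine E_congr fun a => ?_
            rw [E_even]; refine E_congr fun b => ?_
            simp only [Q_glue, Q_neg, T_neg_right]; ring
      _ = _ := by
            simp only [E_add, E_cmul, E_mulc, E_const, E_Q, E_T_sq, ih]; push_cast; ring

/-- Twice the number of edges: `L ^ 2` contains `ω x * ω y` with coefficient `2` for each edge. -/
lemma E_LLQ (n : ℕ) : E n (fun a => L a ^ 2 * Q a) = n * 2 ^ n := by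
  induction n with
  | zero => simp [E_zero, Q_zero]
  | succ n ih =>
    calc _ = E n fun a => E n fun b => L a ^ 2 * Q a + L b ^ 2 * Q b + L a ^ 2 * Q b
              + Q a * L b ^ 2 + 2 * (L a * (L b * T a b)) := by
            rw [E_succ]; refine E_congr fun a => ?_
            rw [E_even]; refine E_congr fun b => ?_
            simp only [Q_glue, Q_neg, L_glue, L_neg, T_neg_right]; ring
      _ = E n (fun a => L a ^ 2 * Q a) + E n (fun a => L a ^ 2 * Q a)
            + 2 * E n (fun a => L a ^ 2) := by
            simp only [E_add, E_cmul, E_mulc, E_const, E_Q, E_LT, ← pow_two]; ring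
      _ = _ := by rw [ih, E_L_sq]; push_cast; ring

/-- Integrating `b` out of `Q b` against two overlaps with `a` reproduces `Q a`, since `T a b ^ 2`
contains each `b x * b y` with coefficient `2 * a x * a y`. -/
lemma E_QTT {n : ℕ} (a : Signs n) : E n (fun b => Q b * T a b ^ 2) = 2 * Q a := by
  induction n with
  | zero => simp [E_zero, Q_zero]
  | succ n ih =>
    obtain ⟨⟨a, a'⟩, rfl⟩ := (glueEquiv n).surjective a
    calc _ = E n fun b => E n fun b' =>
              Q b * T a b ^ 2 + Q b' * T a' b' ^ 2 + 2 * ((Q b * T a b) * T a' b')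
              + Q b * T a' b' ^ 2 + 2 * (T a b * (Q b' * T a' b')) + T a b ^ 2 * Q b'
              + T a b ^ 2 * T b b' + 2 * (T a b * (T b b' * T a' b'))
              + T b b' * T a' b' ^ 2 := by
            rw [E_succ]; refine E_congr fun b => E_congr fun b' => ?_
            simp only [glueEquiv, Equiv.coe_fn_mk, Q_glue, T_glue]; ring
      _ = _ := by
            -- Odd in `b'`.
            have h1 : ∀ b, E n (fun b' => T b b' * T a' b' ^ 2) = 0 := fun b => by
              rw [E_even]; simp [E_const]
            have h2 : E n (fun b => T a b * T b a') = T a a' := by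
              simp_rw [fun b => T_comm b a', E_TT a' a, T_comm a a']
            simp only [E_add, E_cmul, E_mulc, E_const, E_Q, E_T_one, E_T_sq, E_TT, h1, h2, ih,
              glueEquiv, Equiv.coe_fn_mk, Q_glue]
            ring

lemma E_Q_four (n : ℕ) : E n (fun a => Q a ^ 4)
    = 3 * n ^ 2 * (2 ^ n) ^ 2 / 4 - n * 2 ^ n + 3 * n * (n - 1) * 2 ^ n := by
  induction n with
  | zero => simp [E_zero, Q_zero]
  | succ n ih =>
    calc _ = E n fun a => E n fun b =>
              Q a ^ 4 + 4 * (Q a ^ 3 * Q b) + 6 * (Q a ^ 2 * Q b ^ 2) + 4 * (Q a * Q b ^ 3)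
              + Q b ^ 4 + 6 * (Q a ^ 2 * T a b ^ 2) + 12 * (Q a * (Q b * T a b ^ 2))
              + 6 * (Q b ^ 2 * T a b ^ 2) + T a b ^ 4 := by
            rw [E_succ]; refine E_congr fun a => ?_
            rw [E_even]; refine E_congr fun b => ?_
            simp only [Q_glue, Q_neg, T_neg_right]; ring
      _ = _ := by
            -- Here `a` occurs only in the overlap, so it is integrated out first.
            have h1 : E n (fun a => E n fun b => Q b ^ 2 * T a b ^ 2)
                = E n (fun a => Q a ^ 2) * 2 ^ n := by
              rw [E_comm]
              simp only [E_cmul, E_mulc, E_T_sq']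
            have h2 : E n (fun a => Q a * (2 * Q a)) = 2 * E n (fun a => Q a ^ 2) := by
              rw [← E_cmul]; exact E_congr fun a => by ring
            simp only [E_add, h1, E_cmul, E_mulc, E_const, E_Q, E_T_sq, E_T_four, E_QTT, h2, ih,
              E_Q_sq]
            push_cast; ring

lemma E_LLQQ (n : ℕ) : E n (fun a => L a ^ 2 * Q a ^ 2)
    = n * (2 ^ n) ^ 2 / 2 + 2 * n * (n - 1) * 2 ^ n := by
  induction n with
  | zero => simp [E_zero, Q_zero]
  | succ n ih =>
    calc _ = E n fun a => E n fun b =>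
              L a ^ 2 * Q a ^ 2 + 2 * ((L a ^ 2 * Q a) * Q b) + L a ^ 2 * Q b ^ 2
              + L a ^ 2 * T a b ^ 2 + Q a ^ 2 * L b ^ 2 + 2 * (Q a * (L b ^ 2 * Q b))
              + L b ^ 2 * Q b ^ 2 + L b ^ 2 * T a b ^ 2
              + 4 * ((L a * Q a) * (L b * T a b)) + 4 * ((L b * Q b) * (L a * T a b)) := by
            rw [E_succ]; refine E_congr fun a => ?_
            rw [E_even]; refine E_congr fun b => ?_
            simp only [Q_glue, Q_neg, L_glue, L_neg, T_neg_right]; ring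
      _ = _ := by
            have h0 : E n (fun a => (L a * Q a) * L a) = E n (fun a => L a ^ 2 * Q a) :=
              E_congr fun a => by ring
            -- In the next two terms `a` has to be integrated out before `b`.
            have h1 : E n (fun a => E n fun b => L b ^ 2 * T a b ^ 2) = 2 ^ n * 2 ^ n := by
              rw [E_comm]
              simp only [E_cmul, E_mulc, E_T_sq', E_L_sq]
            have h2 : E n (fun a => E n fun b => (L b * Q b) * (L a * T a b))
                = E n (fun a => L a ^ 2 * Q a) := by
              rw [E_comm]
              simp only [E_cmul, E_LT', h0]
            simp only [E_add, h1, h2, E_cmul, E_mulc, E_const, E_Q, E_T_sq, E_LT, h0, ih,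
              E_Q_sq, E_L_sq, E_LLQ]
            push_cast; ring

/-- The cross terms with an odd power of `L` vanish by the global sign flip. -/
lemma E_combination (n : ℕ) (c : ℝ) : E n (fun a => (c * L a + Q a) ^ 4)
    = c ^ 4 * E n (fun a => L a ^ 4) + 6 * c ^ 2 * E n (fun a => L a ^ 2 * Q a ^ 2)
      + E n (fun a => Q a ^ 4) := by
  simp only [← E_cmul, ← E_add]
  rw [E_even]
  refine E_congr fun a => ?_
  simp only [L_neg, Q_neg]; ring

/-! ### From subsets to signs -/

/-- The subset encoded by a sign configuration: the vertices with sign `+1`. -/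
def pos {n : ℕ} (a : Signs n) : Finset (Fin n → Bool) := Finset.univ.filter fun x => a x = 1

/-- Sign configurations correspond bijectively to subsets of the cube. -/
def posEquiv (n : ℕ) : Signs n ≃ Finset (Fin n → Bool) where
  toFun := pos
  invFun S x := if x ∈ S then 1 else -1
  left_inv a := by
    funext x
    rcases Int.units_eq_one_or (a x) with h | h <;> simp [pos, h]
  right_inv S := by
    ext x
    by_cases h : x ∈ S <;> simp [pos, h]

lemma Ex_eq (n : ℕ) (f : Finset (Fin n → Bool) → ℝ) : Ex n f = E n fun a => f (pos a) := by
  unfold Ex E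
  rw [← Fintype.expect_eq_sum_div_card]
  exact (Fintype.expect_equiv (posEquiv n) _ _ fun _ => rfl).symm

lemma Xr_eq_sum (n r : ℕ) (S : Finset (Fin n → Bool)) :
    (Xr n r S : ℝ) = ∑ w : Fin n → Option Bool, if w ∈ Word n r ∧ cube w ⊆ S then 1 else 0 := by
  rw [Xr, Finset.sum_boole]
  congr 2
  ext w; simp

lemma mem_Word_cons_none {n r : ℕ} (w : Fin n → Option Bool) :
    Fin.cons none w ∈ Word (n + 1) (r + 1) ↔ w ∈ Word n r := by
  simp [Word, Fin.card_filter_univ_succ]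

lemma mem_Word_cons_some {n r : ℕ} (b : Bool) (w : Fin n → Option Bool) :
    Fin.cons (some b) w ∈ Word (n + 1) r ↔ w ∈ Word n r := by
  simp [Word, Fin.card_filter_univ_succ]

lemma cube_cons_some_subset {n : ℕ} (i : Bool) (w : Fin n → Option Bool) (a b : Signs n) :
    cube (Fin.cons (some i) w) ⊆ pos (glue a b) ↔ cube w ⊆ pos (if i then b else a) := by
  simp only [Finset.subset_iff, cube, pos, Finset.mem_filter, Finset.mem_univ, true_and]
  constructor
  · intro h x hx
    have := @h (Fin.cons i x) (by
      intro j; cases j using Fin.cases <;> simp_all)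
    cases i <;> simpa using this
  · intro h x hx
    induction x using Fin.consCases with
    | cons k x =>
      have h0 : k = i := by simpa using hx 0
      have h1 := @h x (fun j => by simpa using hx j.succ)
      subst h0
      cases k <;> simpa using h1

lemma cube_cons_none_subset {n : ℕ} (w : Fin n → Option Bool) (a b : Signs n) :
    cube (Fin.cons none w) ⊆ pos (glue a b) ↔ cube w ⊆ pos a ∩ pos b := by
  simp only [Finset.subset_iff, cube, pos, Finset.mem_filter, Finset.mem_univ, true_and,
    Finset.mem_inter]
  constructor
  · intro h x hx
    have h' : ∀ i, glue a b (Fin.cons i x) = 1 := fun i => h (by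
      intro j; cases j using Fin.cases <;> simp_all)
    exact ⟨by simpa using h' false, by simpa using h' true⟩
  · intro h x hx
    induction x using Fin.consCases with
    | cons k x =>
      have h1 := @h x (fun j => by simpa using hx j.succ)
      cases k <;> simp [h1]

lemma Xr_zero (n : ℕ) (S : Finset (Fin n → Bool)) : Xr n 0 S = S.card := by
  unfold Xr
  symm
  refine Finset.card_bij (fun x _ => fun i => some (x i)) ?_ ?_ ?_
  · intro x hx
    simp only [Finset.mem_filter, Word, Finset.mem_univ, true_and, cube, Finset.subset_iff]
    refine ⟨by simp, fun y hy => ?_⟩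
    have : y = x := funext fun i => hy i _ rfl
    rwa [this]
  · intro x _ y _ h
    funext i
    simpa using congrFun h i
  · intro w hw
    simp only [Finset.mem_filter, Word, Finset.mem_univ, true_and, cube, Finset.subset_iff,
      Finset.card_eq_zero, Finset.filter_eq_empty_iff] at hw
    have hs : ∀ i, ∃ b, w i = some b := fun i => Option.ne_none_iff_exists'.mp (hw.1 trivial)
    choose x hx using hs
    refine ⟨x, hw.2 fun i b hb => ?_, funext fun i => (hx i).symm⟩
    simpa [hx i] using hb

lemma card_inter_pos {n : ℕ} (a b : Signs n) :
    4 * (((pos a ∩ pos b).card : ℕ) : ℝ) = 2 ^ n + L a + L b + T a b := by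
  have h1 : (((pos a ∩ pos b).card : ℕ) : ℝ)
      = ∑ x, (1 + ((a x : ℤ) : ℝ)) * (1 + ((b x : ℤ) : ℝ)) / 4 := by
    rw [pos, pos, ← Finset.filter_and, ← Finset.sum_boole]
    refine Finset.sum_congr rfl fun x _ => ?_
    rcases Int.units_eq_one_or (a x) with h | h <;>
      rcases Int.units_eq_one_or (b x) with h' | h' <;> norm_num [h, h']
  have h2 : (2 : ℝ) ^ n = ∑ _x : Fin n → Bool, 1 := by simp
  rw [h1, h2, L, L, T, ← Finset.sum_add_distrib, ← Finset.sum_add_distrib,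
    ← Finset.sum_add_distrib, Finset.mul_sum]
  exact Finset.sum_congr rfl fun x _ => by ring

/-- An edge of the `(n+1)`-cube lies in one of the halves or joins the two copies of a vertex. -/
lemma Xr_glue {n : ℕ} (a b : Signs n) :
    (Xr (n + 1) 1 (pos (glue a b)) : ℝ)
      = Xr n 1 (pos a) + Xr n 1 (pos b) + ((pos a ∩ pos b).card : ℕ) := by
  rw [← Xr_zero]
  simp only [Xr_eq_sum]
  rw [sum_cube_succ, Fintype.sum_option]
  have hnone (w : Fin n → Option Bool) : Fin.cons none w ∈ Word (n + 1) 1 ↔ w ∈ Word n 0 :=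
    mem_Word_cons_none w
  simp only [Fintype.sum_bool, cube_cons_none_subset, cube_cons_some_subset, mem_Word_cons_some,
    hnone, if_true, Bool.false_eq_true, if_false]
  ring

lemma Xr_one {n : ℕ} (a : Signs n) :
    4 * (Xr n 1 (pos a) : ℝ) = n * 2 ^ n / 2 + n * L a + Q a := by
  induction n with
  | zero =>
    have : Word 0 1 = ∅ := by decide
    simp [Xr, this, Q_zero]
  | succ n ih =>
    obtain ⟨⟨a, b⟩, rfl⟩ := (glueEquiv n).surjective a
    simp only [glueEquiv, Equiv.coe_fn_mk, Xr_glue, L_glue, Q_glue]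
    push_cast
    linear_combination ih a + ih b + card_inter_pos a b

end SignCube

open SignCube in
/-- The fourth central moment of the number of edges contained in a uniformly
random subset of `{0,1}^n`. -/
theorem fourth_central_moment_X1 (n : ℕ) :
    Ex n (fun S => ((Xr n 1 S : ℝ) - Ex n (fun S' => (Xr n 1 S' : ℝ))) ^ 4)
      = (n : ℝ) * 2 ^ n / 1024 *
          (12 * (n : ℝ) ^ 3 * 2 ^ n + 12 * (n : ℝ) ^ 2 * 2 ^ n + 40 * (n : ℝ) ^ 3
            + 3 * (n : ℝ) * 2 ^ n - 48 * (n : ℝ) ^ 2 + 12 * (n : ℝ) - 16) := by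
  have hX (a : Signs n) : (Xr n 1 (pos a) : ℝ) = 1 / 4 * (n * 2 ^ n / 2 + n * L a + Q a) := by
    rw [← Xr_one]; ring
  have hmean : Ex n (fun S => (Xr n 1 S : ℝ)) = n * 2 ^ n / 8 := by
    rw [Ex_eq]
    simp only [hX, E_cmul, E_add, E_const, E_L, E_Q]; ring
  have hcent : Ex n (fun S => ((Xr n 1 S : ℝ) - n * 2 ^ n / 8) ^ 4)
      = 1 / 256 * E n (fun a => (n * L a + Q a) ^ 4) := by
    rw [Ex_eq, ← E_cmul]
    refine E_congr fun a => ?_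
    rw [hX]; ring
  rw [hmean, hcent, E_combination, E_L_four, E_LLQQ, E_Q_four]
  ring
end

section
/- For a uniformly random subset S of {0,1}^n, the third central moment of the number X_2 of 2-dimensional subcubes (squares) contained in S equals (2^n · n · (n−1)/32768) · (9 n⁴ + 6 n³ + 21 n² − 16 n − 34). -/
/-!
Write `X_2 - μ₂` as the sum over all squares `u` of `1[u ⊆ S] - 1/16`; its third moment is the sum
over triples `(u, v, w)` of the joint cumulants, computed from `P(T ⊆ S) = 2 ^ (-|T|)`. With
`cv u v = 2 ^ |u ∩ v| - 1`, the lemma `cumulant` shows that `4096` times the joint cumulant is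

`cv u v * cv u w + cv u v * cv v w + cv u w * cv v w + (correction)`,

where the correction vanishes unless `u ∩ v ∩ w` is nonempty. This uses the Helly property of
subcubes (`helly`): if the three covariances are all nonzero, the squares have a common point.

The sum of `cv u v` over `u` does not depend on `v` and equals `2 n ^ 2 + 2 n + 3` (`sum_cv`), so the
three products of covariances contribute `3 * #squares * (2 n ^ 2 + 2 n + 3) ^ 2`. The correction is
spread evenly over the points of `u ∩ v ∩ w`. Squares through a fixed vertex correspond to pairs of
directions (`sum_words_through`), and the sizes of intersections of squares with a common point
are powers of two given by the number of common directions, so the correction becomes `2 ^ n` times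
a sum over triples of pairs of directions (`sum_corr_words`). That sum is computed one pair at a
time, by counting directions according to their membership in the remaining pairs
(`sum_pairs_colour`).
-/

open Finset

/-! ### Subcubes through a common vertex -/

/-- The set of free directions of a word. -/
def dir {n : ℕ} (w : Fin n → Option Bool) : Finset (Fin n) :=
  Finset.univ.filter fun i => w i = none

/-- The face through the vertex `x` with set of free directions `D`. -/
def face {n : ℕ} (D : Finset (Fin n)) (x : Fin n → Bool) : Finset (Fin n → Bool) :=
  Finset.univ.filter fun y => ∀ i, i ∉ D → y i = x i

/-- The indicator of the event `T ⊆ S`. -/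
noncomputable def ind {n : ℕ} (T S : Finset (Fin n → Bool)) : ℝ := if T ⊆ S then 1 else 0

lemma mem_cube {n : ℕ} (w : Fin n → Option Bool) (x : Fin n → Bool) :
    x ∈ cube w ↔ ∀ i, ∀ b, w i = some b → x i = b := by simp [cube]

lemma mem_Word {n r : ℕ} (w : Fin n → Option Bool) : w ∈ Word n r ↔ (dir w).card = r := by
  simp [Word, dir]

lemma cube_eq_face {n : ℕ} {w : Fin n → Option Bool} {x : Fin n → Bool} (h : x ∈ cube w) :
    cube w = face (dir w) x := by
  rw [mem_cube] at h
  ext y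
  simp only [mem_cube, face, dir, mem_filter, mem_univ, true_and]
  constructor
  · intro hy i hi
    obtain ⟨b, hb⟩ := Option.ne_none_iff_exists'.mp hi
    rw [hy i b hb, h i b hb]
  · intro hy i b hb
    rw [hy i (by simp [hb]), h i b hb]

lemma face_inter {n : ℕ} (D E : Finset (Fin n)) (x : Fin n → Bool) :
    face D x ∩ face E x = face (D ∩ E) x := by
  ext y
  simp only [face, mem_inter, mem_filter, mem_univ, true_and]
  constructor
  · rintro ⟨h1, h2⟩ i hi
    by_cases hD : i ∈ D
    · exact h2 i fun hE => hi ⟨hD, hE⟩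
    · exact h1 i hD
  · intro h
    exact ⟨fun i hi => h i fun hh => hi hh.1, fun i hi => h i fun hh => hi hh.2⟩

lemma card_face {n : ℕ} (D : Finset (Fin n)) (x : Fin n → Bool) :
    (face D x).card = 2 ^ D.card := by
  have : face D x = Fintype.piFinset (fun i => if i ∈ D then univ else {x i}) := by
    ext y
    simp only [face, mem_filter, mem_univ, true_and, Fintype.mem_piFinset]
    refine forall_congr' fun i => ?_
    by_cases h : i ∈ D <;> simp [h]
  rw [this, Fintype.card_piFinset]
  have h2 : ∀ i, (if i ∈ D then (univ : Finset Bool) else {x i}).card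
      = if i ∈ D then 2 else 1 := by
    intro i; by_cases h : i ∈ D <;> simp [h]
  simp_rw [h2]
  rw [Finset.prod_ite]
  simp

lemma cube_nonempty {n : ℕ} (w : Fin n → Option Bool) : (cube w).Nonempty :=
  ⟨fun i => (w i).getD false, by rw [mem_cube]; intro i b hb; simp [hb]⟩

lemma card_cube {n r : ℕ} {w : Fin n → Option Bool} (h : w ∈ Word n r) :
    (cube w).card = 2 ^ r := by
  obtain ⟨x, hx⟩ := cube_nonempty w
  rw [cube_eq_face hx, card_face, (mem_Word w).1 h]

lemma card_inter {n : ℕ} {u v : Fin n → Option Bool} {x : Fin n → Bool}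
    (hu : x ∈ cube u) (hv : x ∈ cube v) :
    (cube u ∩ cube v).card = 2 ^ (dir u ∩ dir v).card := by
  rw [cube_eq_face hu, cube_eq_face hv, face_inter, card_face]

lemma card_inter₃ {n : ℕ} {u v w : Fin n → Option Bool} {x : Fin n → Bool}
    (hu : x ∈ cube u) (hv : x ∈ cube v) (hw : x ∈ cube w) :
    (cube u ∩ cube v ∩ cube w).card = 2 ^ (dir u ∩ dir v ∩ dir w).card := by
  rw [cube_eq_face hu, cube_eq_face hv, cube_eq_face hw, face_inter, face_inter, card_face]

/-- Helly property of subcubes: three pairwise intersecting subcubes have a common point. -/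
lemma helly {n : ℕ} {u v w : Fin n → Option Bool} (h1 : (cube u ∩ cube v).Nonempty)
    (h2 : (cube u ∩ cube w).Nonempty) (h3 : (cube v ∩ cube w).Nonempty) :
    (cube u ∩ cube v ∩ cube w).Nonempty := by
  obtain ⟨x, hx⟩ := h1
  obtain ⟨y, hy⟩ := h2
  obtain ⟨z, hz⟩ := h3
  simp only [mem_inter, mem_cube] at hx hy hz
  -- Follow `x` on the fixed coordinates of `u` and `z` on its free coordinates.
  refine ⟨fun i => if u i = none then z i else x i, ?_⟩
  simp only [mem_inter, mem_cube]
  refine ⟨⟨fun i b hb => ?_, fun i b hb => ?_⟩, fun i b hb => ?_⟩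
  · simp [hb, hx.1 i b hb]
  · simp [hx.2 i b hb, hz.1 i b hb]
  · by_cases h : u i = none
    · simp [h, hz.2 i b hb]
    · obtain ⟨c, hc⟩ := Option.ne_none_iff_exists'.mp h
      simp [hc, hx.1 i c hc, ← hy.1 i c hc, hy.2 i b hb]

/-- A subcube through a given vertex is determined by its free directions. -/
lemma sum_words_through {n : ℕ} (x : Fin n → Bool) (F : Finset (Fin n) → ℝ) (r : ℕ) :
    ∑ w ∈ Word n r, (if x ∈ cube w then F (dir w) else 0)
      = ∑ D ∈ powersetCard r univ, F D := by
  rw [← Finset.sum_filter]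
  refine Finset.sum_bij' (fun w _ => dir w) (fun D _ i => if i ∈ D then none else some (x i))
    ?_ ?_ ?_ ?_ ?_
  · intro w hw
    rw [mem_filter, mem_Word] at hw
    simp [mem_powersetCard, hw.1]
  · intro D hD
    rw [mem_powersetCard] at hD
    rw [mem_filter, mem_Word, mem_cube]
    refine ⟨?_, ?_⟩
    · rw [← hD.2]; congr 1; ext i; simp [dir]
    · intro i b; by_cases h : i ∈ D <;> simp [h]
  · intro w hw
    rw [mem_filter, mem_cube] at hw
    funext i
    cases h : w i with
    | none => simp [dir, h]
    | some b => simp [dir, h, hw.2 i b h]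
  · intro D hD
    ext i; simp [dir]
  · intro w hw; rfl

/-! ### Sums over pairs of directions -/

/-- Each pair of directions comes from two ordered pairs of distinct directions. -/
lemma sum_pairs {n : ℕ} (F : Finset (Fin n) → ℝ) :
    ∑ D ∈ powersetCard 2 univ, F D
      = (∑ p ∈ (univ : Finset (Fin n)).offDiag, F {p.1, p.2}) / 2 := by
  have hm : ∀ p ∈ (univ : Finset (Fin n)).offDiag,
      ({p.1, p.2} : Finset (Fin n)) ∈ powersetCard 2 (univ : Finset (Fin n)) := by
    intro p hp
    rw [mem_offDiag] at hp
    simp [mem_powersetCard, card_pair hp.2.2]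
  rw [← Finset.sum_fiberwise_of_maps_to hm, Finset.sum_div]
  refine Finset.sum_congr rfl fun D hD => ?_
  rw [Finset.sum_congr rfl (g := fun _ => F D)
    (fun p hp => by rw [(mem_filter.1 hp).2])]
  obtain ⟨a, b, hab, rfl⟩ := card_eq_two.1 (mem_powersetCard.1 hD).2
  have : ((univ : Finset (Fin n)).offDiag.filter fun p => ({p.1, p.2} : Finset (Fin n)) = {a, b})
      = {(a, b), (b, a)} := by
    ext ⟨p, q⟩
    simp only [mem_filter, mem_offDiag, mem_univ, true_and, mem_insert, mem_singleton,
      Prod.mk.injEq]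
    constructor
    · rintro ⟨hpq, h⟩
      have hp : p ∈ ({a, b} : Finset (Fin n)) := h ▸ (by simp)
      have hq : q ∈ ({a, b} : Finset (Fin n)) := h ▸ (by simp)
      simp only [mem_insert, mem_singleton] at hp hq
      rcases hp with rfl | rfl <;> rcases hq with rfl | rfl <;> simp_all
    · rintro (⟨rfl, rfl⟩ | ⟨rfl, rfl⟩)
      · exact ⟨hab, rfl⟩
      · exact ⟨hab.symm, pair_comm _ _⟩
  rw [this, sum_const, card_pair (by simp [hab])]
  simp

/-- Summation by colour classes. -/
lemma sum_colour {n : ℕ} {κ : Type*} [Fintype κ] [DecidableEq κ] (t : Fin n → κ) (f : κ → ℝ) :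
    ∑ i, f (t i) = ∑ c, ((univ.filter fun i => t i = c).card : ℝ) * f c := by
  rw [← Finset.sum_fiberwise univ t]
  refine Finset.sum_congr rfl fun c _ => ?_
  rw [Finset.sum_congr rfl (g := fun _ => f c)
    (fun p hp => by rw [(mem_filter.1 hp).2])]
  simp

/-- A sum over pairs of directions whose terms depend only on the colours of the two
directions is determined by the sizes of the colour classes. -/
lemma sum_pairs_colour {n : ℕ} {κ : Type*} [Fintype κ] [DecidableEq κ] (t : Fin n → κ)
    (N : κ → ℝ) (hN : ∀ c, ((univ.filter fun i => t i = c).card : ℝ) = N c)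
    (F : Finset (Fin n) → ℝ) (f : κ → κ → ℝ)
    (hF : ∀ i j, i ≠ j → F {i, j} = f (t i) (t j)) :
    ∑ D ∈ powersetCard 2 univ, F D
      = ((∑ c, N c * ∑ c', N c' * f c c') - ∑ c, N c * f c c) / 2 := by
  rw [sum_pairs, Finset.sum_congr rfl (g := fun p => f (t p.1) (t p.2))
    (fun p hp => hF _ _ (mem_offDiag.1 hp).2.2)]
  congr 1
  rw [eq_sub_iff_add_eq]
  simp_rw [← hN, ← sum_colour]
  rw [← sum_product' univ univ (fun i j => f (t i) (t j)), ← diag_union_offDiag,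
    sum_union (disjoint_diag_offDiag _), sum_diag, add_comm]

/-- The number of elements of `X` among the two directions `i ≠ j`. -/
lemma card_pair_inter {n : ℕ} {i j : Fin n} (h : i ≠ j) (X : Finset (Fin n)) :
    (({i, j} : Finset (Fin n)) ∩ X).card
      = (decide (i ∈ X)).toNat + (decide (j ∈ X)).toNat := by
  by_cases hi : i ∈ X <;> by_cases hj : j ∈ X <;>
    simp [hi, hj, insert_inter_of_mem, insert_inter_of_notMem, singleton_inter_of_mem,
      singleton_inter_of_notMem, card_pair h]

/-- Given a pair `E`, there are `(n-2)(n-3)/2` pairs disjoint from `E`, `2(n-2)` pairs meeting it in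
one direction, and `E` itself. -/
lemma sum_one_set {n : ℕ} {E : Finset (Fin n)} (hE : E.card = 2) (φ : ℕ → ℝ) :
    ∑ D ∈ powersetCard 2 univ, φ (D ∩ E).card
      = ((n : ℝ) - 2) * ((n : ℝ) - 3) / 2 * φ 0 + 2 * ((n : ℝ) - 2) * φ 1 + φ 2 := by
  rw [sum_pairs_colour (fun i => decide (i ∈ E)) (fun c => if c then 2 else (n : ℝ) - 2) ?_ _
    (fun c c' => φ (c.toNat + c'.toNat)) (fun i j h => by rw [card_pair_inter h])]
  · simp
    ring
  · intro c
    cases c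
    · have := Finset.card_filter_add_card_filter_not (s := (univ : Finset (Fin n))) (fun i => i ∈ E)
      simp [hE] at this
      simp [← this]
    · simp [hE]

lemma card_pairs (n : ℕ) :
    ∑ _D ∈ powersetCard 2 (univ : Finset (Fin n)), (1 : ℝ) = (n : ℝ) * ((n : ℝ) - 1) / 2 := by
  simp [Nat.cast_choose_two]

/-- Directions are coloured by their membership in `E` and in `F`; `N` gives the sizes of the colour
classes and `f` the summand in terms of the colours of two directions. -/
lemma sum_two_sets {n : ℕ} {E F : Finset (Fin n)} (hE : E.card = 2) (hF : F.card = 2)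
    (H : ℕ → ℕ → ℕ → ℝ) (N : Bool × Bool → ℝ)
    (hN : N = fun c => match c with
      | (true, true) => ((E ∩ F).card : ℝ)
      | (true, false) => 2 - ((E ∩ F).card : ℝ)
      | (false, true) => 2 - ((E ∩ F).card : ℝ)
      | (false, false) => (n : ℝ) - 4 + ((E ∩ F).card : ℝ))
    (f : Bool × Bool → Bool × Bool → ℝ)
    (hf : f = fun c c' => H (c.1.toNat + c'.1.toNat) (c.2.toNat + c'.2.toNat)
      ((c.1 && c.2).toNat + (c'.1 && c'.2).toNat)) :
    ∑ D ∈ powersetCard 2 univ, H (D ∩ E).card (D ∩ F).card (D ∩ E ∩ F).card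
      = ((∑ c, N c * ∑ c', N c' * f c c') - ∑ c, N c * f c c) / 2 := by
  refine sum_pairs_colour (fun i => (decide (i ∈ E), decide (i ∈ F))) N ?_ _ f ?_
  · have h1 := Finset.card_inter_add_card_sdiff E F
    have h2 := Finset.card_inter_add_card_sdiff F E
    have h3 := Finset.card_union_add_card_inter E F
    have h4 := Finset.card_add_card_compl (E ∪ F)
    rw [inter_comm F E] at h2
    rw [hE] at h1; rw [hF] at h2; rw [hE, hF] at h3; rw [Fintype.card_fin] at h4
    rw [compl_union] at h4
    rify at h1 h2 h3 h4
    have e1 : (univ.filter fun i => i ∈ E ∧ i ∈ F) = E ∩ F := by ext; simp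
    have e2 : (univ.filter fun i => i ∈ E ∧ i ∉ F) = E \ F := by ext; simp
    have e3 : (univ.filter fun i => i ∉ E ∧ i ∈ F) = F \ E := by ext; simp [and_comm]
    have e4 : (univ.filter fun i => i ∉ E ∧ i ∉ F) = Eᶜ ∩ Fᶜ := by ext; simp
    rintro ⟨a, b⟩
    cases a <;> cases b <;> simp [hN, e1, e2, e3, e4] <;> linarith
  · intro i j h
    rw [hf, inter_assoc, card_pair_inter h, card_pair_inter h, card_pair_inter h]
    simp

/-! ### Probabilities and cumulants -/

/-- For two squares with a common point and `k` common directions, `(2 ^ |u ∩ v| - 1) / |u ∩ v|`. -/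
noncomputable def phi (k : ℕ) : ℝ := (2 ^ 2 ^ k - 1) / 2 ^ k

/-- The correction term for three squares with a common point, per common point; `a`, `b`, `c`
count the directions shared by two of them and `d` those shared by all three. -/
noncomputable def corr (a b c d : ℕ) : ℝ :=
  ((2 ^ 2 ^ a - 1) * (2 ^ 2 ^ b - 1) * (2 ^ 2 ^ c - 1)
    - (1 - 1 / 2 ^ 2 ^ d) * (2 ^ 2 ^ a * 2 ^ 2 ^ b * 2 ^ 2 ^ c)) / 2 ^ d

/-- The normalised covariance `2 ^ |u ∩ v| - 1` of two squares. -/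
noncomputable def cv {n : ℕ} (u v : Fin n → Option Bool) : ℝ := 2 ^ (cube u ∩ cube v).card - 1

/-- The normalised covariance, spread evenly over the common points of the two squares. -/
lemma cv_eq {n : ℕ} (u v : Fin n → Option Bool) :
    cv u v = ∑ x, if x ∈ cube u then (if x ∈ cube v then phi (dir u ∩ dir v).card else 0) else 0 := by
  simp_rw [← ite_and, ← mem_inter]
  rw [← Finset.sum_filter, filter_mem_eq_inter, univ_inter, sum_const, nsmul_eq_mul, cv]
  rcases (cube u ∩ cube v).eq_empty_or_nonempty with h | ⟨x, hx⟩
  · simp [h]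
  · rw [mem_inter] at hx
    rw [card_inter hx.1 hx.2, phi]
    push_cast
    field_simp

lemma Ex_add {n : ℕ} (f g : Finset (Fin n → Bool) → ℝ) :
    Ex n (fun S => f S + g S) = Ex n f + Ex n g := by
  simp [Ex, sum_add_distrib, add_div]

lemma Ex_mul {n : ℕ} (c : ℝ) (g : Finset (Fin n → Bool) → ℝ) :
    Ex n (fun S => c * g S) = c * Ex n g := by
  simp [Ex, ← mul_sum, mul_div_assoc]

lemma Ex_const {n : ℕ} (c : ℝ) : Ex n (fun _ => c) = c := by
  simp [Ex]

lemma Ex_sum {n : ℕ} {ι : Type*} (s : Finset ι) (f : ι → Finset (Fin n → Bool) → ℝ) :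
    Ex n (fun S => ∑ i ∈ s, f i S) = ∑ i ∈ s, Ex n (f i) := by
  simp only [Ex]
  rw [sum_comm, sum_div]

lemma Ex_ind {n : ℕ} (T : Finset (Fin n → Bool)) : Ex n (ind T) = 1 / 2 ^ T.card := by
  have h : (univ.filter fun S : Finset (Fin n → Bool) => T ⊆ S) = Finset.Icc T univ := by
    ext S; simp
  have h1 : ∑ S, ind T S = (2 : ℝ) ^ (Fintype.card (Fin n → Bool) - T.card) := by
    simp only [ind]
    rw [sum_boole, h, card_Icc_finset (subset_univ _), card_univ]
    push_cast; rfl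
  rw [Ex, h1, Fintype.card_finset, pow_sub₀ _ two_ne_zero (card_le_univ T)]
  push_cast
  field_simp

lemma ind_mul {n : ℕ} (T T' S : Finset (Fin n → Bool)) : ind T S * ind T' S = ind (T ∪ T') S := by
  simp only [ind, union_subset_iff, ite_and]
  by_cases h : T ⊆ S <;> simp [h]

lemma Xr_eq {n r : ℕ} (S : Finset (Fin n → Bool)) :
    (Xr n r S : ℝ) = ∑ w ∈ Word n r, ind (cube w) S := by
  simp only [ind, Xr]
  rw [sum_boole]

/-- The probability that two squares are both contained in `S`. -/
lemma card_union_two {n : ℕ} {u v : Fin n → Option Bool} (hu : u ∈ Word n 2) (hv : v ∈ Word n 2) :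
    (1 : ℝ) / 2 ^ (cube u ∪ cube v).card = (1 + cv u v) / 256 := by
  have h := card_union_add_card_inter (cube u) (cube v)
  rw [card_cube hu, card_cube hv] at h
  have : (2 : ℝ) ^ (cube u ∪ cube v).card * 2 ^ (cube u ∩ cube v).card = 256 := by
    rw [← pow_add, h]; norm_num
  rw [cv]
  field_simp
  linarith

/-- The probability that three squares are all contained in `S`. -/
lemma card_union_three {n : ℕ} {u v w : Fin n → Option Bool} (hu : u ∈ Word n 2)
    (hv : v ∈ Word n 2) (hw : w ∈ Word n 2) :
    (1 : ℝ) / 2 ^ (cube u ∪ cube v ∪ cube w).card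
      = (1 + cv u v) * (1 + cv u w) * (1 + cv v w) / 2 ^ (cube u ∩ cube v ∩ cube w).card / 4096 := by
  have h1 := card_union_add_card_inter (cube u) (cube v)
  have h2 := card_union_add_card_inter (cube u ∪ cube v) (cube w)
  have h3 := card_union_add_card_inter (cube u ∩ cube w) (cube v ∩ cube w)
  rw [← union_inter_distrib_right, ← inter_inter_distrib_right] at h3
  rw [card_cube hu, card_cube hv] at h1
  rw [card_cube hw] at h2
  have : (2 : ℝ) ^ (cube u ∪ cube v ∪ cube w).card * (2 ^ (cube u ∩ cube v).card
      * 2 ^ (cube u ∩ cube w).card * 2 ^ (cube v ∩ cube w).card)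
      = 4096 * 2 ^ (cube u ∩ cube v ∩ cube w).card := by
    rw [show (4096 : ℝ) = 2 ^ 12 by norm_num, ← pow_add, ← pow_add, ← pow_add, ← pow_add]
    congr 1
    omega
  simp only [cv]
  field_simp
  ring_nf at this ⊢
  linarith

/-- The joint third cumulant (third joint central moment) of three squares. Covariances contribute through products of two of
them; all the rest is carried by the points common to the three squares. -/
lemma cumulant {n : ℕ} {u v w : Fin n → Option Bool} (hu : u ∈ Word n 2)
    (hv : v ∈ Word n 2) (hw : w ∈ Word n 2) :
    Ex n (fun S => (ind (cube u) S - 1 / 16) * (ind (cube v) S - 1 / 16) * (ind (cube w) S - 1 / 16))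
      = (cv u v * cv u w + cv u v * cv v w + cv u w * cv v w
        + ∑ x, if x ∈ cube u then (if x ∈ cube v then (if x ∈ cube w then
            corr (dir u ∩ dir v).card (dir u ∩ dir w).card (dir v ∩ dir w).card
              (dir u ∩ dir v ∩ dir w).card else 0) else 0) else 0) / 4096 := by
  have e : ∀ S, (ind (cube u) S - 1 / 16) * (ind (cube v) S - 1 / 16) * (ind (cube w) S - 1 / 16)
      = ind (cube u ∪ cube v ∪ cube w) S + ((-1 / 16) * ind (cube u ∪ cube v) S
        + ((-1 / 16) * ind (cube u ∪ cube w) S + ((-1 / 16) * ind (cube v ∪ cube w) S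
        + ((1 / 256) * ind (cube u) S + ((1 / 256) * ind (cube v) S + ((1 / 256) * ind (cube w) S
        + (-1 / 4096))))))) := by
    intro S
    simp only [← ind_mul]
    ring
  simp_rw [e, Ex_add, Ex_mul, Ex_const, Ex_ind]
  rw [card_union_two hu hv, card_union_two hu hw, card_union_two hv hw,
    card_union_three hu hv hw, card_cube hu, card_cube hv, card_cube hw]
  simp_rw [← ite_and, ← mem_inter, ← inter_assoc]
  rw [← Finset.sum_filter, filter_mem_eq_inter, univ_inter, sum_const, nsmul_eq_mul]
  rcases (cube u ∩ cube v ∩ cube w).eq_empty_or_nonempty with h | ⟨x, hx⟩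
  · have h0 : cv u v * cv u w * cv v w = 0 := by
      by_contra hne
      have aux : ∀ u v : Fin n → Option Bool, cv u v ≠ 0 → (cube u ∩ cube v).Nonempty := by
        intro u v huv
        by_contra hemp
        rw [not_nonempty_iff_eq_empty] at hemp
        simp [cv, hemp] at huv
      have := helly (aux u v (by rintro h; simp [h] at hne)) (aux u w (by rintro h; simp [h] at hne))
        (aux v w (by rintro h; simp [h] at hne))
      rw [h] at this
      simp at this
    rw [h, card_empty]
    linear_combination h0 / 4096
  · simp only [mem_inter] at hx
    obtain ⟨⟨xu, xv⟩, xw⟩ := hx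
    rw [card_inter₃ xu xv xw, cv, cv, cv, card_inter xu xv, card_inter xu xw, card_inter xv xw,
      corr]
    push_cast
    field_simp
    ring

/-! ### Summation over all squares -/

lemma cv_comm {n : ℕ} (u v : Fin n → Option Bool) : cv u v = cv v u := by
  rw [cv, cv, inter_comm]

lemma sum_cv {n : ℕ} {v : Fin n → Option Bool} (hv : v ∈ Word n 2) :
    ∑ u ∈ Word n 2, cv u v = 2 * (n : ℝ) ^ 2 + 2 * n + 3 := by
  simp_rw [cv_eq]
  rw [sum_comm]
  have : ∀ x, (∑ u ∈ Word n 2, if x ∈ cube u then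
        (if x ∈ cube v then phi (dir u ∩ dir v).card else 0) else 0)
      = if x ∈ cube v then ∑ D ∈ powersetCard 2 univ, phi (D ∩ dir v).card else 0 := by
    intro x
    rw [sum_words_through x (fun D => if x ∈ cube v then phi (D ∩ dir v).card else 0)]
    by_cases h : x ∈ cube v <;> simp [h]
  simp_rw [this]
  rw [← Finset.sum_filter, filter_mem_eq_inter, univ_inter, sum_const, nsmul_eq_mul, card_cube hv,
    sum_one_set ((mem_Word v).1 hv)]
  norm_num [phi]
  ring

/-- The number of squares, by double counting incidences between squares and vertices. -/
lemma card_Word_two (n : ℕ) : ((Word n 2).card : ℝ) = 2 ^ n * (n * ((n : ℝ) - 1)) / 8 := by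
  have h : ∀ w ∈ Word n 2, (1 : ℝ) = (∑ x, if x ∈ cube w then (1 : ℝ) else 0) / 4 := by
    intro w hw
    rw [← Finset.sum_filter, filter_mem_eq_inter, univ_inter, sum_const, card_cube hw]
    norm_num
  rw [card_eq_sum_ones]
  push_cast
  rw [sum_congr rfl h, ← sum_div, sum_comm]
  simp_rw [sum_words_through _ (fun _ => (1 : ℝ)), card_pairs]
  simp
  ring

/-- The sum of `corr` over one pair of directions, the two others being fixed and sharing
`k ≤ 2` directions. -/
noncomputable def corrSum (n : ℝ) : ℕ → ℝ
  | 0 => -3 / 2 * n ^ 2 - 13 / 2 * n - 12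
  | 1 => -5 / 2 * n ^ 2 - 7 * n - 37 / 2
  | _ => -17 / 2 * n ^ 2 - 29 / 2 * n - 213 / 4

lemma sum_corr_one {n : ℕ} {E F : Finset (Fin n)} (hE : E.card = 2) (hF : F.card = 2) :
    ∑ D ∈ powersetCard 2 univ,
      corr (D ∩ E).card (D ∩ F).card (E ∩ F).card (D ∩ E ∩ F).card
      = corrSum n (E ∩ F).card := by
  rw [sum_two_sets hE hF (fun a b d => corr a b (E ∩ F).card d) _ rfl _ rfl]
  have hc : (E ∩ F).card ≤ 2 := hE ▸ card_le_card inter_subset_left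
  generalize (E ∩ F).card = c at hc ⊢
  interval_cases c <;>
  · simp [Fintype.sum_prod_type]
    norm_num [corr, corrSum]
    ring

lemma sum_corr (n : ℕ) :
    ∑ F ∈ powersetCard 2 (univ : Finset (Fin n)), ∑ E ∈ powersetCard 2 univ,
      ∑ D ∈ powersetCard 2 univ,
        corr (D ∩ E).card (D ∩ F).card (E ∩ F).card (D ∩ E ∩ F).card
      = n * ((n : ℝ) - 1) / 2 * (((n : ℝ) - 2) * ((n : ℝ) - 3) / 2 * corrSum n 0
        + 2 * ((n : ℝ) - 2) * corrSum n 1 + corrSum n 2) := by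
  rw [← card_pairs n, sum_mul]
  refine sum_congr rfl fun F hF => ?_
  have hF := (mem_powersetCard.1 hF).2
  rw [sum_congr rfl fun E hE => sum_corr_one (mem_powersetCard.1 hE).2 hF, sum_one_set hF, one_mul]

/-- Triples of squares through a common vertex correspond to triples of pairs of directions. -/
lemma sum_corr_words (n : ℕ) :
    ∑ w ∈ Word n 2, ∑ v ∈ Word n 2, ∑ u ∈ Word n 2, ∑ x : Fin n → Bool,
      (if x ∈ cube u then (if x ∈ cube v then (if x ∈ cube w then
            corr (dir u ∩ dir v).card (dir u ∩ dir w).card (dir v ∩ dir w).card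
              (dir u ∩ dir v ∩ dir w).card else 0) else 0) else 0)
      = 2 ^ n * (n * ((n : ℝ) - 1) / 2 * (((n : ℝ) - 2) * ((n : ℝ) - 3) / 2 * corrSum n 0
        + 2 * ((n : ℝ) - 2) * corrSum n 1 + corrSum n 2)) := by
  -- Bring the sum over `x` to the front, then fix `x` and remove the words one at a time.
  simp_rw [fun w v => sum_comm (s := Word n 2) (t := (univ : Finset (Fin n → Bool)))
    (f := fun u x => (if x ∈ cube u then (if x ∈ cube v then (if x ∈ cube w then
            corr (dir u ∩ dir v).card (dir u ∩ dir w).card (dir v ∩ dir w).card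
              (dir u ∩ dir v ∩ dir w).card else 0) else 0) else 0))]
  rw [sum_congr rfl fun w _ => sum_comm, sum_comm]
  have key : ∀ x : Fin n → Bool, ∑ w ∈ Word n 2, ∑ v ∈ Word n 2, ∑ u ∈ Word n 2,
      (if x ∈ cube u then (if x ∈ cube v then (if x ∈ cube w then
            corr (dir u ∩ dir v).card (dir u ∩ dir w).card (dir v ∩ dir w).card
              (dir u ∩ dir v ∩ dir w).card else 0) else 0) else 0)
      = ∑ F ∈ powersetCard 2 (univ : Finset (Fin n)), ∑ E ∈ powersetCard 2 univ,
        ∑ D ∈ powersetCard 2 univ,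
          corr (D ∩ E).card (D ∩ F).card (E ∩ F).card (D ∩ E ∩ F).card := by
    intro x
    rw [← sum_words_through x (fun F => ∑ E ∈ powersetCard 2 univ,
        ∑ D ∈ powersetCard 2 univ,
          corr (D ∩ E).card (D ∩ F).card (E ∩ F).card (D ∩ E ∩ F).card)]
    refine sum_congr rfl fun w _ => ?_
    split_ifs with hw
    · rw [← sum_words_through x (fun E => ∑ D ∈ powersetCard 2 univ,
          corr (D ∩ E).card (D ∩ dir w).card (E ∩ dir w).card (D ∩ E ∩ dir w).card)]
      refine sum_congr rfl fun v _ => ?_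
      split_ifs with hv
      · rw [← sum_words_through x (fun D =>
          corr (D ∩ dir v).card (D ∩ dir w).card (dir v ∩ dir w).card
            (D ∩ dir v ∩ dir w).card)]
      · simp
    · simp
  rw [sum_congr rfl fun x _ => key x, sum_corr]
  simp

/-- The third central moment of the number of squares (2-dimensional subcubes)
contained in a uniformly random subset of `{0,1}^n`. -/
theorem third_central_moment_X2 (n : ℕ) :
    Ex n (fun S => ((Xr n 2 S : ℝ) - Ex n (fun S' => (Xr n 2 S' : ℝ))) ^ 3)
      = 2 ^ n * (n : ℝ) * ((n : ℝ) - 1) / 32768 *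
          (9 * (n : ℝ) ^ 4 + 6 * (n : ℝ) ^ 3 + 21 * (n : ℝ) ^ 2 - 16 * (n : ℝ) - 34) := by
  have hmean : Ex n (fun S' => (Xr n 2 S' : ℝ)) = ∑ w ∈ Word n 2, 1 / 16 := by
    simp_rw [Xr_eq]
    rw [Ex_sum]
    refine sum_congr rfl fun w hw => ?_
    rw [Ex_ind, card_cube hw]
    norm_num
  have hcube : ∀ S, ((Xr n 2 S : ℝ) - Ex n (fun S' => (Xr n 2 S' : ℝ))) ^ 3
      = ∑ w ∈ Word n 2, ∑ v ∈ Word n 2, ∑ u ∈ Word n 2,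
        (ind (cube u) S - 1 / 16) * (ind (cube v) S - 1 / 16) * (ind (cube w) S - 1 / 16) := by
    intro S
    rw [hmean, Xr_eq, ← sum_sub_distrib, pow_three]
    simp_rw [← sum_mul, ← mul_sum]
    ring
  simp_rw [hcube, Ex_sum]
  rw [sum_congr rfl fun w hw => sum_congr rfl fun v hv => sum_congr rfl fun u hu =>
    cumulant hu hv hw]
  -- In each of `h1`, `h2`, `h3` the square occurring in both covariances is summed last.
  set s : ℝ := 2 * (n : ℝ) ^ 2 + 2 * n + 3 with hs
  have h1 : ∑ w ∈ Word n 2, ∑ v ∈ Word n 2, ∑ u ∈ Word n 2, cv u v * cv u w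
      = (Word n 2).card * s ^ 2 := by
    rw [sum_congr rfl fun w _ => sum_comm, sum_comm]
    rw [sum_congr rfl (g := fun _ => s ^ 2), sum_const, nsmul_eq_mul]
    intro u hu
    simp_rw [← sum_mul, ← mul_sum, cv_comm u, sum_cv hu]
    rw [← hs]; ring
  have h2 : ∑ w ∈ Word n 2, ∑ v ∈ Word n 2, ∑ u ∈ Word n 2, cv u v * cv v w
      = (Word n 2).card * s ^ 2 := by
    rw [sum_comm, sum_congr rfl (g := fun _ => s ^ 2), sum_const, nsmul_eq_mul]
    intro v hv
    simp_rw [← sum_mul, ← mul_sum, cv_comm v, sum_cv hv]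
    rw [← hs]; ring
  have h3 : ∑ w ∈ Word n 2, ∑ v ∈ Word n 2, ∑ u ∈ Word n 2, cv u w * cv v w
      = (Word n 2).card * s ^ 2 := by
    rw [sum_congr rfl (g := fun _ => s ^ 2), sum_const, nsmul_eq_mul]
    intro w hw
    simp_rw [← sum_mul, ← mul_sum, sum_cv hw]
    rw [← hs]; ring
  simp_rw [← sum_div, sum_add_distrib]
  rw [h1, h2, h3, sum_corr_words, card_Word_two, hs]
  simp only [corrSum]
  ring
end
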